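/- The abelian group Ext(ℚ, ℤ ⊕ ⋯ ⊕ ℤ) (with finitely many summands, at least one) has the cardinality of the continuum. -/

import Mathlib

open CategoryTheory

namespace CategoryTheory

open Limits ZeroObject

section TwoTerm

variable {C : Type*} [Category* C] [Abelian C]

/-- The chain complex `⋯ ⟶ 0 ⟶ A ⟶ B` with `B` in degree `0`. -/
noncomputable def twoTermComplex {A B : C} (f : A ⟶ B) : ChainComplex C ℕ :=
  ChainComplex.of (fun | 0 => B | 1 => A | _ + 2 => 0) (fun | 0 => f | _ + 1 => 0)
    (by rintro (_ | n) <;> simp)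

lemma twoTermComplex_d_one_zero {A B : C} (f : A ⟶ B) : (twoTermComplex f).d 1 0 = f := by
  dsimp only [twoTermComplex, ChainComplex.of]
  exact ChainComplex.of_d _ _ 0

lemma isZero_twoTermComplex_X {A B : C} (f : A ⟶ B) (n : ℕ) :
    IsZero ((twoTermComplex f).X (n + 2)) :=
  isZero_zero C

/-- A short exact sequence with projective first and second terms is a projective resolution
of its third term. -/
noncomputable def ShortComplex.ShortExact.projectiveResolution {S : ShortComplex C}
    (hS : S.ShortExact) [Projective S.X₁] [Projective S.X₂] : ProjectiveResolution S.X₃ where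
  complex := twoTermComplex S.f
  projective n := match n with
    | 0 => inferInstanceAs (Projective S.X₂)
    | 1 => inferInstanceAs (Projective S.X₁)
    | n + 2 => (isZero_twoTermComplex_X S.f n).projective
  π := (ChainComplex.toSingle₀Equiv (twoTermComplex S.f) _).symm ⟨S.g, by
    rw [twoTermComplex_d_one_zero]; exact S.zero⟩
  quasiIso := ⟨fun n => by
    match n with
    | 0 =>
      rw [ChainComplex.quasiIsoAt₀_iff, ShortComplex.quasiIso_iff_of_zeros' _ rfl rfl rfl]
      refine (ShortComplex.exact_and_epi_g_iff_of_iso ?_).2 ⟨hS.exact, hS.epi_g⟩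
      exact ShortComplex.isoMk (Iso.refl _) (Iso.refl _) (Iso.refl _)
        ((Category.id_comp _).trans
          ((twoTermComplex_d_one_zero S.f).symm.trans (Category.comp_id _).symm))
        ((Category.id_comp _).trans (.trans (ChainComplex.toSingle₀Equiv_symm_apply_f_zero
          (C := twoTermComplex S.f) S.g _).symm (Category.comp_id _).symm))
    | 1 =>
      rw [quasiIsoAt_iff_exactAt' (hL := ChainComplex.exactAt_succ_single_obj ..),
        HomologicalComplex.exactAt_iff' _ 2 1 0 (by simp) (by simp)]
      refine (ShortComplex.exact_iff_mono _ ((isZero_twoTermComplex_X S.f 0).eq_of_src _ _)).2 ?_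
      change Mono ((twoTermComplex S.f).d 1 0)
      rw [twoTermComplex_d_one_zero]
      exact hS.mono_f
    | n + 2 =>
      rw [quasiIsoAt_iff_exactAt' (hL := ChainComplex.exactAt_succ_single_obj ..)]
      exact ShortComplex.exact_of_isZero_X₂ _ (isZero_twoTermComplex_X S.f n)⟩

end TwoTerm

lemma ShortComplex.exists_surjective_homology {R : Type*} [Ring R] (S : ShortComplex (ModuleCat R))
    (hg : S.g = 0) :
    ∃ π : S.X₂ → S.homology, Function.Surjective π ∧
      ∀ a b, π a = π b ↔ ∃ x, S.f x = a - b := by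
  refine ⟨fun a => S.moduleCatHomologyIso.inv
    ((LinearMap.range S.moduleCatToCycles).mkQ ⟨a, by simp [hg]⟩), fun y => ?_, fun a b => ?_⟩
  · obtain ⟨⟨a, ha⟩, h⟩ := Submodule.mkQ_surjective _ (S.moduleCatHomologyIso.hom y)
    exact ⟨a, by simp only []; erw [h]; simp⟩
  · have hinj : Function.Injective S.moduleCatHomologyIso.inv :=
      (ModuleCat.mono_iff_injective _).1 inferInstance
    refine hinj.eq_iff.trans ((Submodule.Quotient.eq _).trans ?_)
    rw [LinearMap.mem_range]
    exact exists_congr fun x => Subtype.ext_iff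

lemma ShortComplex.ShortExact.exists_surjective_Ext_one (R : Type*) [Ring R]
    {C : Type*} [Category* C] [Abelian C] [Linear R C] [EnoughProjectives C]
    {S : ShortComplex C} (hS : S.ShortExact) [Projective S.X₁] [Projective S.X₂] (Y : C) :
    ∃ π : (S.X₁ ⟶ Y) → ((Ext R C 1).obj (Opposite.op S.X₃)).obj Y, Function.Surjective π ∧
      ∀ a b, π a = π b ↔ ∃ x : S.X₂ ⟶ Y, S.f ≫ x = a - b := by
  let K := hS.projectiveResolution.complex.linearYonedaObj R Y
  let e : ((Ext R C 1).obj (Opposite.op S.X₃)).obj Y ≅ (K.sc' 0 1 2).homology :=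
    hS.projectiveResolution.isoExt 1 Y ≪≫
      ShortComplex.homologyMapIso (K.isoSc' 0 1 2 (by simp) (by simp))
  obtain ⟨π, hπ, h⟩ := (K.sc' 0 1 2).exists_surjective_homology (by
    ext (x : _ ⟶ Y)
    exact (isZero_twoTermComplex_X S.f 0).eq_of_src _ _)
  refine ⟨fun a => e.inv (π a), ?_, fun a b => ?_⟩
  · exact ((ModuleCat.epi_iff_surjective e.inv).1 inferInstance).comp hπ
  · refine (((ModuleCat.mono_iff_injective e.inv).1 inferInstance).eq_iff.trans (h a b)).trans ?_
    have key (x : S.X₂ ⟶ Y) : (K.sc' 0 1 2).f x = S.f ≫ x :=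
      congrArg (· ≫ x) (twoTermComplex_d_one_zero S.f)
    exact exists_congr fun x => by rw [← key x]; rfl

end CategoryTheory

open Cardinal

/-- The endomorphism of `ℤ^(ℕ)` mapping `e k` to `e k - (k + 2) e (k + 1)`. -/
noncomputable def factorialRelations : (ℕ →₀ ℤ) →ₗ[ℤ] (ℕ →₀ ℤ) :=
  Finsupp.linearCombination ℤ fun k => .single k 1 - .single (k + 1) (k + 2 : ℤ)

/-- The map `ℤ^(ℕ) → ℚ` sending `e k` to `1 / (k + 1)!`. -/
noncomputable def factorialGenerators : (ℕ →₀ ℤ) →ₗ[ℤ] ℚ :=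
  Finsupp.linearCombination ℤ fun k => 1 / ((k + 1).factorial : ℚ)

lemma factorialRelations_single (k : ℕ) (a : ℤ) :
    factorialRelations (.single k a) = .single k a - .single (k + 1) (a * (k + 2)) := by
  simp only [factorialRelations, Finsupp.linearCombination_single, smul_sub, Finsupp.smul_single,
    smul_eq_mul, mul_one]

lemma factorialGenerators_single (k : ℕ) (a : ℤ) :
    factorialGenerators (.single k a) = a / ((k + 1).factorial : ℚ) := by
  simp [factorialGenerators, div_eq_mul_inv]

lemma factorialRelations_apply_zero (x : ℕ →₀ ℤ) : factorialRelations x 0 = x 0 := by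
  induction x using Finsupp.induction_linear with
  | zero => simp
  | add x y hx hy => simp [hx, hy]
  | single k a => simp [factorialRelations_single]

lemma factorialRelations_apply_succ (x : ℕ →₀ ℤ) (j : ℕ) :
    factorialRelations x (j + 1) = x (j + 1) - (j + 2) * x j := by
  induction x using Finsupp.induction_linear with
  | zero => simp
  | add x y hx hy => simp [hx, hy]; ring
  | single k a =>
    by_cases h : k = j
    · subst h; simp [factorialRelations_single]; ring
    · simp [factorialRelations_single, h]

lemma factorialRelations_injective : Function.Injective factorialRelations := by
  rw [injective_iff_map_eq_zero]
  intro x hx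
  ext j
  induction j with
  | zero => rw [← factorialRelations_apply_zero, hx]
  | succ j ih =>
    have := factorialRelations_apply_succ x j
    simp_all

lemma factorialGenerators_surjective : Function.Surjective factorialGenerators := by
  intro q
  refine ⟨.single (q.den - 1) (q.num * (q.den - 1).factorial), ?_⟩
  obtain ⟨d, hd⟩ : ∃ d, q.den = d + 1 := ⟨q.den - 1, by have := q.den_pos; omega⟩
  rw [factorialGenerators_single]
  nth_rw 4 [← Rat.num_div_den q]
  rw [hd, Nat.add_sub_cancel, Nat.factorial_succ]
  have := Nat.factorial_ne_zero d
  push_cast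
  field_simp

lemma factorialGenerators_comp_factorialRelations :
    factorialGenerators ∘ₗ factorialRelations = 0 := by
  ext k
  have := Nat.factorial_ne_zero (k + 1)
  simp [factorialRelations_single, factorialGenerators_single, Nat.factorial_succ (k + 1)]
  field_simp
  ring

lemma exists_sub_single_mem_range_factorialRelations (x : ℕ →₀ ℤ) :
    ∃ N₀ : ℕ, ∀ N ≥ N₀, ∃ c : ℤ, x - .single N c ∈ LinearMap.range factorialRelations := by
  induction x using Finsupp.induction_linear with
  | zero => exact ⟨0, fun N _ => ⟨0, by simp⟩⟩
  | add x y hx hy =>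
    obtain ⟨Nx, hx⟩ := hx
    obtain ⟨Ny, hy⟩ := hy
    refine ⟨max Nx Ny, fun N hN => ?_⟩
    obtain ⟨c, hc⟩ := hx N (le_of_max_le_left hN)
    obtain ⟨d, hd⟩ := hy N (le_of_max_le_right hN)
    refine ⟨c + d, ?_⟩
    rw [Finsupp.single_add, add_sub_add_comm]
    exact add_mem hc hd
  | single k a =>
    refine ⟨k, fun N hN => ?_⟩
    induction N, hN using Nat.le_induction with
    | base => exact ⟨a, by simp⟩
    | succ N _ ih =>
      obtain ⟨c, hc⟩ := ih
      refine ⟨c * (N + 2), ?_⟩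
      rw [← sub_add_sub_cancel _ (Finsupp.single N c)]
      exact add_mem hc ⟨.single N c, factorialRelations_single N c⟩

lemma exact_factorialRelations_factorialGenerators :
    Function.Exact factorialRelations factorialGenerators := by
  refine LinearMap.exact_iff.2 (le_antisymm (fun x hx => ?_)
    (LinearMap.range_le_ker_iff.2 factorialGenerators_comp_factorialRelations))
  obtain ⟨N, hN⟩ := exists_sub_single_mem_range_factorialRelations x
  obtain ⟨c, hc⟩ := hN N le_rfl
  have hc' := LinearMap.range_le_ker_iff.2 factorialGenerators_comp_factorialRelations hc
  rw [LinearMap.mem_ker, map_sub, hx, factorialGenerators_single] at hc'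
  have : c = 0 := by simpa [Nat.factorial_ne_zero] using hc'
  simpa [this] using hc

/-- The presentation of `ℚ` by the generators `1 / (k + 1)!` and the relations
`1 / (k + 1)! = (k + 2) / (k + 2)!`. -/
noncomputable def factorialPresentation : ShortComplex (ModuleCat ℤ) :=
  ShortComplex.mk (ModuleCat.ofHom factorialRelations) (ModuleCat.ofHom factorialGenerators)
    (ModuleCat.hom_ext factorialGenerators_comp_factorialRelations)

lemma factorialPresentation_shortExact : factorialPresentation.ShortExact :=
  ModuleCat.shortComplex_shortExact _ exact_factorialRelations_factorialGenerators
    factorialRelations_injective factorialGenerators_surjective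

/-- A sequence of bits is determined by another one, an integer `x 0`, and the fact that their
difference is of the form `x k - (k + 2) x (k + 1)`. -/
lemma eq_of_bit_sub_eq {s t u : ℕ → Bool} {x y : ℕ → ℤ}
    (hx : ∀ k, x k - (k + 2) * x (k + 1) = (s k).toNat - (u k).toNat)
    (hy : ∀ k, y k - (k + 2) * y (k + 1) = (t k).toNat - (u k).toNat) (h : x 0 = y 0) :
    s = t := by
  have step (k : ℕ) (hk : x k = y k) : s k = t k ∧ x (k + 1) = y (k + 1) := by
    have hd : (k + 2 : ℤ) * (y (k + 1) - x (k + 1)) = (s k).toNat - (t k).toNat := by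
      linear_combination hx k - hy k - hk
    have hz : ((s k).toNat - (t k).toNat : ℤ) = 0 := by
      refine Int.eq_zero_of_abs_lt_dvd (m := k + 2) ⟨_, hd.symm⟩ ?_
      cases s k <;> cases t k <;> simp <;> omega
    refine ⟨?_, ?_⟩
    · revert hz
      cases s k <;> cases t k <;> simp
    · rw [hz] at hd
      rcases mul_eq_zero.1 hd with h | h <;> omega
  have hxy (k : ℕ) : x k = y k := by
    induction k with
    | zero => exact h
    | succ k ih => exact (step k ih).2
  exact funext fun k => (step k (hxy k)).1

/-- For every `n ≥ 1`, the abelian group `Ext¹_ℤ(ℚ, ℤ ⊕ ⋯ ⊕ ℤ)` (with `n` summands `ℤ`)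
has the cardinality of the continuum. -/
theorem stmt1 (n : ℕ) (hn : 1 ≤ n) :
    Cardinal.mk (((Ext ℤ (ModuleCat ℤ) 1).obj
        (Opposite.op (ModuleCat.of ℤ ℚ))).obj (ModuleCat.of ℤ (Fin n → ℤ))) =
      Cardinal.continuum := by
  have : Projective factorialPresentation.X₁ :=
    inferInstanceAs (Projective (ModuleCat.of ℤ (ℕ →₀ ℤ)))
  have : Projective factorialPresentation.X₂ :=
    inferInstanceAs (Projective (ModuleCat.of ℤ (ℕ →₀ ℤ)))
  obtain ⟨π, hπ, h⟩ := factorialPresentation_shortExact.exists_surjective_Ext_one ℤ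
    (ModuleCat.of ℤ (Fin n → ℤ))
  have : Nonempty (Fin n) := ⟨⟨0, hn⟩⟩
  apply le_antisymm
  · refine (mk_le_of_surjective hπ).trans ?_
    have e : (factorialPresentation.X₁ ⟶ ModuleCat.of ℤ (Fin n → ℤ)) ≃ (ℕ → Fin n → ℤ) :=
      ModuleCat.homEquiv.trans (Finsupp.lift (Fin n → ℤ) ℤ ℕ).toEquiv.symm
    rw [mk_congr e]
    simp
  · let i : Fin n := ⟨0, hn⟩
    let lift (s : ℕ → Bool) : factorialPresentation.X₁ ⟶ ModuleCat.of ℤ (Fin n → ℤ) :=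
      ModuleCat.ofHom (Finsupp.lift (Fin n → ℤ) ℤ ℕ fun k _ => ((s k).toNat : ℤ))
    have hfiber (b) : #((π ∘ lift) ⁻¹' {b}) ≤ ℵ₀ := by
      rcases ((π ∘ lift) ⁻¹' {b}).eq_empty_or_nonempty with hb | ⟨u, hu⟩
      · simp [hb]
      have hx (s : (π ∘ lift) ⁻¹' {b}) : ∃ x : ℕ → ℤ,
          ∀ k, x k - (k + 2) * x (k + 1) = (s.1 k).toNat - (u k).toNat := by
        obtain ⟨x, hx⟩ := (h (lift s) (lift u)).1 (s.2.trans hu.symm)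
        let x' : (ℕ →₀ ℤ) →ₗ[ℤ] (Fin n → ℤ) := x.hom
        refine ⟨fun k => x' (.single k 1) i, fun k => ?_⟩
        have hk : x' (factorialRelations (.single k 1)) =
            Finsupp.lift (Fin n → ℤ) ℤ ℕ (fun k _ => ((s.1 k).toNat : ℤ)) (.single k 1) -
              Finsupp.lift (Fin n → ℤ) ℤ ℕ (fun k _ => ((u k).toNat : ℤ)) (.single k 1) :=
          congrArg (fun φ => φ.hom (Finsupp.single k (1 : ℤ))) hx
        have hmul : x' (.single (k + 1) (k + 2)) = (k + 2 : ℤ) • x' (.single (k + 1) 1) := by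
          rw [← map_smul, Finsupp.smul_single_one]
        rw [factorialRelations_single, map_sub, one_mul, hmul] at hk
        simpa using congrFun hk i
      choose x hx using hx
      exact mk_le_aleph0_iff.2 (Function.Injective.countable (f := fun s => x s 0)
        fun s t hst => Subtype.ext (eq_of_bit_sub_eq (hx s) (hx t) hst))
    have hle := mk_le_mk_mul_of_mk_preimage_le (π ∘ lift) hfiber
    rw [mk_arrow] at hle
    by_contra! hlt
    have := hle.trans_lt (mul_lt_of_lt aleph0_le_continuum hlt aleph0_lt_continuum)
    simp at this
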